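/- If a POVM A ∈ O(Ω,H) does not disturb an instrument J ∈ Ins(Λ,H,V), then A and J are compatible. Conversely, if A is sharp (projection-valued) and A and J are compatible, then A does not disturb J; in fact the Lüders instrument I^A of A does not disturb J. -/

import Mathlib

open scoped Kronecker ComplexOrder
open Matrix

noncomputable section

/-- The positive semidefinite square root of a positive semidefinite matrix
(Mathlib's former `Matrix.PosSemidef.sqrt`). -/
def Matrix.PosSemidef.sqrt {n 𝕜 : Type*} [Fintype n] [RCLike 𝕜] [DecidableEq n]
    {A : Matrix n n 𝕜} (hA : A.PosSemidef) : Matrix n n 𝕜 :=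
  hA.1.eigenvectorUnitary.1 * diagonal ((↑) ∘ Real.sqrt ∘ hA.1.eigenvalues) *
    (star hA.1.eigenvectorUnitary : Matrix n n 𝕜)

/-- Linear maps between matrix algebras, representing super-operators
`L(H) → L(K)` for finite-dimensional Hilbert spaces with index types `dH`, `dK`. -/
abbrev MatMap (dH dK : Type) : Type := Matrix dH dH ℂ →ₗ[ℂ] Matrix dK dK ℂ

variable {Ω Λ dH dK dV dA dA' : Type}

/-- The Choi matrix of a super-operator. -/
def choiMatrix [DecidableEq dH] (Φ : MatMap dH dK) : Matrix (dH × dK) (dH × dK) ℂ :=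
  fun p q => Φ (single p.1 q.1 1) p.2 q.2

/-- Complete positivity of a super-operator (positivity of its Choi matrix). -/
def IsCP [Fintype dH] [DecidableEq dH] [Fintype dK] (Φ : MatMap dH dK) : Prop :=
  (choiMatrix Φ).PosSemidef

/-- A quantum state: a positive semidefinite matrix of unit trace. -/
def IsState [Fintype dH] (ρ : Matrix dH dH ℂ) : Prop := ρ.PosSemidef ∧ ρ.trace = 1

/-- Trace-nonincreasing super-operator. -/
def IsTNI [Fintype dH] [Fintype dK] (Φ : MatMap dH dK) : Prop :=
  ∀ ρ : Matrix dH dH ℂ, ρ.PosSemidef → (Φ ρ).trace ≤ ρ.trace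

/-- Trace-preserving super-operator. -/
def IsTP [Fintype dH] [Fintype dK] (Φ : MatMap dH dK) : Prop :=
  ∀ ρ : Matrix dH dH ℂ, (Φ ρ).trace = ρ.trace

/-- A quantum instrument with outcome set `Ω` from system `dH` to system `dK`:
a family of completely positive trace-nonincreasing maps summing to a channel. -/
structure Instrument (Ω dH dK : Type) [Fintype Ω] [Fintype dH] [DecidableEq dH]
    [Fintype dK] : Type where
  op : Ω → MatMap dH dK
  cp : ∀ x, IsCP (op x)
  tni : ∀ x, IsTNI (op x)
  tp : IsTP (∑ x, op x)

/-- A quantum channel: a completely positive trace-preserving super-operator. -/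
structure Channel (dH dK : Type) [Fintype dH] [DecidableEq dH] [Fintype dK] : Type where
  map : MatMap dH dK
  cp : IsCP map
  tp : IsTP map

/-- A POVM with outcome set `Ω` on system `d`. -/
structure POVM (Ω d : Type) [Fintype Ω] [Fintype d] [DecidableEq d] : Type where
  elem : Ω → Matrix d d ℂ
  pos : ∀ x, (elem x).PosSemidef
  sum_eq : ∑ x, elem x = 1

/-- The effect (induced POVM element) of an operation `Φ`:
the unique matrix `A` with `tr[A ρ] = tr[Φ ρ]` for all `ρ`. -/
def dualId [Fintype dH] [DecidableEq dH] [Fintype dK] (Φ : MatMap dH dK) :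
    Matrix dH dH ℂ :=
  fun i j => (Φ (single j i 1)).trace

/-- Partial trace over the first tensor factor. -/
def ptraceL [Fintype dA] (M : Matrix (dA × dK) (dA × dK) ℂ) : Matrix dK dK ℂ :=
  fun i j => ∑ a, M (a, i) (a, j)

/-- Partial trace over the second tensor factor. -/
def ptraceR [Fintype dV] (M : Matrix (dK × dV) (dK × dV) ℂ) : Matrix dK dK ℂ :=
  fun i j => ∑ b, M (i, b) (j, b)

/-- Compatibility of two instruments: existence of a joint instrument whose
partial-trace marginals (summed over the other outcome) reproduce both instruments
on all states. -/
def InsCompatible [Fintype Ω] [Fintype Λ] [Fintype dH] [DecidableEq dH] [Fintype dK]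
    [Fintype dV] (I : Instrument Ω dH dK) (J : Instrument Λ dH dV) : Prop :=
  ∃ G : Instrument (Ω × Λ) dH (dK × dV),
    (∀ y, ∀ ρ : Matrix dH dH ℂ, IsState ρ → ∑ x, ptraceL (G.op (x, y) ρ) = J.op y ρ) ∧
    (∀ x, ∀ ρ : Matrix dH dH ℂ, IsState ρ → ∑ y, ptraceR (G.op (x, y) ρ) = I.op x ρ)

/-- Compatibility of an instrument and a channel (a one-outcome instrument). -/
def InsChCompatible [Fintype Ω] [Fintype dH] [DecidableEq dH] [Fintype dK] [Fintype dV]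
    (I : Instrument Ω dH dK) (Ψ : Channel dH dV) : Prop :=
  ∃ G : Instrument Ω dH (dK × dV),
    (∀ ρ : Matrix dH dH ℂ, IsState ρ → ∑ x, ptraceL (G.op x ρ) = Ψ.map ρ) ∧
    (∀ x, ∀ ρ : Matrix dH dH ℂ, IsState ρ → ptraceR (G.op x ρ) = I.op x ρ)

/-- Compatibility of two channels. -/
def ChCompatible [Fintype dH] [DecidableEq dH] [Fintype dK] [Fintype dV]
    (Φ : Channel dH dK) (Ψ : Channel dH dV) : Prop :=
  ∃ Γ : Channel dH (dK × dV),
    (∀ ρ : Matrix dH dH ℂ, IsState ρ → ptraceL (Γ.map ρ) = Ψ.map ρ) ∧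
    (∀ ρ : Matrix dH dH ℂ, IsState ρ → ptraceR (Γ.map ρ) = Φ.map ρ)

/-- Compatibility of a POVM and an instrument: existence of a joint instrument `G`
with `∑ x, G.op (x, y) = J.op y` and whose induced POVM has the POVM `A` as a margin. -/
def POVMInsCompatible [Fintype Ω] [Fintype Λ] [Fintype dH] [DecidableEq dH] [Fintype dK]
    (A : POVM Ω dH) (J : Instrument Λ dH dK) : Prop :=
  ∃ G : Instrument (Ω × Λ) dH dK,
    (∀ y, ∑ x, G.op (x, y) = J.op y) ∧
    (∀ x, ∑ y, dualId (G.op (x, y)) = A.elem x)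

/-- Compatibility (joint measurability) of two POVMs. -/
def POVMCompatible [Fintype Ω] [Fintype Λ] [Fintype dH] [DecidableEq dH]
    (A : POVM Ω dH) (B : POVM Λ dH) : Prop :=
  ∃ G : POVM (Ω × Λ) dH,
    (∀ y, ∑ x, G.elem (x, y) = B.elem y) ∧
    (∀ x, ∑ y, G.elem (x, y) = A.elem x)

/-- Compatibility of a POVM and a channel: existence of an instrument implementing both. -/
def POVMChCompatible [Fintype Ω] [Fintype dH] [DecidableEq dH] [Fintype dK]
    (A : POVM Ω dH) (Ψ : Channel dH dK) : Prop :=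
  ∃ G : Instrument Ω dH dK,
    (∑ x, G.op x) = Ψ.map ∧ ∀ x, dualId (G.op x) = A.elem x

/-- Instrument postprocessing: `I ⪯ J` if `I_x = ∑ y, R^(y)_x ∘ J_y` for
a family of instruments `R^(y)`. -/
def Postprocessed [Fintype Ω] [Fintype Λ] [Fintype dH] [DecidableEq dH] [Fintype dK]
    [Fintype dV] [DecidableEq dV] (I : Instrument Ω dH dK) (J : Instrument Λ dH dV) : Prop :=
  ∃ R : Λ → Instrument Ω dV dK, ∀ x, I.op x = ∑ y, (R y).op x ∘ₗ J.op y

/-- An instrument `I` does not disturb an instrument `J`: `J_y ∘ Φ^I = J_y`. -/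
def NonDisturbs [Fintype Ω] [Fintype Λ] [Fintype dH] [DecidableEq dH] [Fintype dV]
    (I : Instrument Ω dH dH) (J : Instrument Λ dH dV) : Prop :=
  ∀ y, J.op y ∘ₗ (∑ x, I.op x) = J.op y

/-- An instrument `I` does not disturb a channel `Ψ`: `Ψ ∘ Φ^I = Ψ`. -/
def InsNonDisturbsCh [Fintype Ω] [Fintype dH] [DecidableEq dH] [Fintype dV]
    (I : Instrument Ω dH dH) (Ψ : Channel dH dV) : Prop :=
  Ψ.map ∘ₗ (∑ x, I.op x) = Ψ.map

/-- An instrument `I` does not disturb a POVM `A`: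
the statistics of `A` are unchanged by the channel induced by `I`. -/
def InsNonDisturbsPOVM [Fintype Ω] [Fintype Λ] [Fintype dH] [DecidableEq dH]
    (I : Instrument Ω dH dH) (A : POVM Λ dH) : Prop :=
  ∀ y, ∀ ρ : Matrix dH dH ℂ,
    (A.elem y * ((∑ x, I.op x) ρ)).trace = (A.elem y * ρ).trace

/-- A POVM `A` does not disturb an instrument `J`: some instrument measuring `A`
does not disturb `J`. -/
def POVMNonDisturbs [Fintype Ω] [Fintype Λ] [Fintype dH] [DecidableEq dH] [Fintype dV]
    (A : POVM Ω dH) (J : Instrument Λ dH dV) : Prop :=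
  ∃ I : Instrument Ω dH dH, (∀ x, dualId (I.op x) = A.elem x) ∧ NonDisturbs I J

/-- A POVM `A` does not disturb a channel `Ψ`. -/
def POVMNonDisturbsCh [Fintype Ω] [Fintype dH] [DecidableEq dH] [Fintype dV]
    (A : POVM Ω dH) (Ψ : Channel dH dV) : Prop :=
  ∃ I : Instrument Ω dH dH, (∀ x, dualId (I.op x) = A.elem x) ∧ InsNonDisturbsCh I Ψ

/-- A POVM `A` does not disturb a POVM `B`. -/
def POVMNonDisturbsPOVM [Fintype Ω] [Fintype Λ] [Fintype dH] [DecidableEq dH]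
    (A : POVM Ω dH) (B : POVM Λ dH) : Prop :=
  ∃ I : Instrument Ω dH dH, (∀ x, dualId (I.op x) = A.elem x) ∧ InsNonDisturbsPOVM I B

/-- A sharp (projection-valued) POVM. -/
def IsSharp [Fintype Ω] [Fintype dH] [DecidableEq dH] (A : POVM Ω dH) : Prop :=
  ∀ x, A.elem x * A.elem x = A.elem x

/-- `(H_A, W, E)` is a dilation of the instrument `I`:
`W` is an isometry `H → H_A ⊗ K` and
`I_x(ρ) = Tr_{H_A}[W ρ W* (E(x) ⊗ 1_K)]` on all states. -/
def IsDilation [Fintype Ω] [Fintype dH] [DecidableEq dH] [Fintype dK] [DecidableEq dK]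
    [Fintype dA] [DecidableEq dA] (I : Instrument Ω dH dK)
    (W : Matrix (dA × dK) dH ℂ) (E : POVM Ω dA) : Prop :=
  Wᴴ * W = 1 ∧
  ∀ x, ∀ ρ : Matrix dH dH ℂ, IsState ρ →
    I.op x ρ = ptraceL (W * ρ * Wᴴ * (E.elem x ⊗ₖ (1 : Matrix dK dK ℂ)))

/-- Minimality of a Stinespring isometry `W : H → H_A ⊗ K`:
the span of `{(1 ⊗ B) W φ}` is everything. -/
def IsMinimalW [Fintype dH] [Fintype dK] [DecidableEq dK] [Fintype dA] [DecidableEq dA]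
    (W : Matrix (dA × dK) dH ℂ) : Prop :=
  Submodule.span ℂ {v : (dA × dK) → ℂ |
    ∃ (B : Matrix dK dK ℂ) (φ : dH → ℂ),
      v = ((1 : Matrix dA dA ℂ) ⊗ₖ B) *ᵥ (W *ᵥ φ)} = ⊤

/-- `IC` is the complementary instrument of the instrument dilated by `(W, E)`:
`IC_x(ρ) = Tr_K[(√E(x) ⊗ 1) W ρ W* (√E(x) ⊗ 1)]`. -/
def IsComplementaryOf [Fintype Ω] [Fintype dH] [DecidableEq dH] [Fintype dK]
    [DecidableEq dK] [Fintype dA] [DecidableEq dA] (W : Matrix (dA × dK) dH ℂ) (E : POVM Ω dA)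
    (IC : Instrument Ω dH dA) : Prop :=
  ∀ x, ∀ ρ : Matrix dH dH ℂ,
    IC.op x ρ =
      ptraceR (((E.pos x).sqrt ⊗ₖ (1 : Matrix dK dK ℂ)) * (W * ρ * Wᴴ) *
        ((E.pos x).sqrt ⊗ₖ (1 : Matrix dK dK ℂ)))

/-- A measure-and-prepare instrument: `I_x(ρ) = tr[A(x) ρ] ξ_x`. -/
def IsMeasureAndPrepare [Fintype Ω] [Fintype dH] [DecidableEq dH] [Fintype dK]
    [DecidableEq dK] (I : Instrument Ω dH dK) : Prop :=
  ∃ (A : POVM Ω dH) (ξ : Ω → Matrix dK dK ℂ),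
    (∀ x, IsState (ξ x)) ∧
    ∀ x, ∀ ρ : Matrix dH dH ℂ, I.op x ρ = ((A.elem x * ρ).trace) • ξ x

/-- A pure state: a state which is a (rank-one) projection. -/
def IsPureState [Fintype dK] (ρ : Matrix dK dK ℂ) : Prop :=
  IsState ρ ∧ ρ * ρ = ρ

/-- A rank-1 POVM: every effect has rank at most one. -/
def IsRankOnePOVM [Fintype Ω] [Fintype dH] [DecidableEq dH] (A : POVM Ω dH) : Prop :=
  ∀ x, (A.elem x).rank ≤ 1

/-- POVM postprocessing: `B(y) = ∑ x, ν x y • A(x)` for a stochastic matrix `ν`. -/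
def POVMPostprocessed [Fintype Ω] [Fintype Λ] [Fintype dH] [DecidableEq dH]
    (B : POVM Λ dH) (A : POVM Ω dH) : Prop :=
  ∃ ν : Ω → Λ → ℝ, (∀ x y, 0 ≤ ν x y) ∧ (∀ x, ∑ y, ν x y = 1) ∧
    ∀ y, B.elem y = ∑ x, (ν x y : ℂ) • A.elem x

/-- A measure-and-prepare instrument preparing pure states. -/
def IsMeasureAndPreparePure [Fintype Ω] [Fintype dH] [DecidableEq dH] [Fintype dK]
    [DecidableEq dK] (I : Instrument Ω dH dK) : Prop :=
  ∃ (A : POVM Ω dH) (ξ : Ω → Matrix dK dK ℂ),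
    (∀ x, IsPureState (ξ x)) ∧
    ∀ x, ∀ ρ : Matrix dH dH ℂ, I.op x ρ = ((A.elem x * ρ).trace) • ξ x

/-!
Measuring `A` first with a non-disturbing instrument and `J` afterwards gives a joint instrument.

Conversely, let `G` be a joint instrument and `A` sharp. The effect of `G_(x,y)` lies below the
projection `A(x)`, so every Kraus operator `K` of `G_(x,y)` satisfies `K A(x) = K`, and
`K A(z) = 0` for `z ≠ x` because the projections of a sharp POVM are mutually orthogonal. Hence
`G_(x,y)` is blind to the pinching `ρ ↦ ∑ z, A(z) ρ A(z)`, which is the Lüders channel of `A`;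
summing over `x`, so is `J_y`.
-/

section LinearMap

variable {ι R M N P : Type*} [CommSemiring R] [AddCommMonoid M] [AddCommMonoid N]
  [AddCommMonoid P] [Module R M] [Module R N] [Module R P]

theorem linearMap_sum_comp (s : Finset ι) (g : ι → N →ₗ[R] P) (f : M →ₗ[R] N) :
    (∑ i ∈ s, g i) ∘ₗ f = ∑ i ∈ s, g i ∘ₗ f :=
  map_sum (LinearMap.lcomp R P f) g s

theorem linearMap_comp_sum (s : Finset ι) (g : N →ₗ[R] P) (f : ι → M →ₗ[R] N) :
    g ∘ₗ ∑ i ∈ s, f i = ∑ i ∈ s, g ∘ₗ f i :=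
  map_sum (LinearMap.llcomp R M N P g) f s

end LinearMap

section PosSemidef

variable {ι n 𝕜 : Type*} [Fintype n] [RCLike 𝕜]

theorem mulVec_eq_zero_of_sum_mulVec_eq_zero {s : Finset ι} {M : ι → Matrix n n 𝕜}
    (hM : ∀ i ∈ s, (M i).PosSemidef) {v : n → 𝕜} (hv : (∑ i ∈ s, M i) *ᵥ v = 0) :
    ∀ i ∈ s, M i *ᵥ v = 0 := by
  have hsum : ∑ i ∈ s, star v ⬝ᵥ M i *ᵥ v = 0 := by
    rw [← dotProduct_sum, ← sum_mulVec, hv, dotProduct_zero]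
  intro i hi
  exact ((hM i hi).dotProduct_mulVec_zero_iff v).1 <|
    (Finset.sum_eq_zero_iff_of_nonneg fun j hj => (hM j hj).dotProduct_mulVec_nonneg v).1 hsum i hi

theorem mul_eq_zero_of_sum_mul_eq_zero {m : Type*} {s : Finset ι} {M : ι → Matrix n n 𝕜}
    (hM : ∀ i ∈ s, (M i).PosSemidef) {N : Matrix n m 𝕜} (hN : (∑ i ∈ s, M i) * N = 0) :
    ∀ i ∈ s, M i * N = 0 := by
  intro i hi
  ext j k
  have hcol : (∑ i ∈ s, M i) *ᵥ N.col k = 0 := funext fun l => congrFun₂ hN l k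
  exact congrFun (mulVec_eq_zero_of_sum_mulVec_eq_zero hM hcol i hi) j

theorem mul_eq_self_of_sum_eq_of_isIdempotentElem {s : Finset ι} {M : ι → Matrix n n 𝕜}
    {P : Matrix n n 𝕜} (hM : ∀ i ∈ s, (M i).PosSemidef) (hsum : ∑ i ∈ s, M i = P)
    (hP : IsIdempotentElem P) : ∀ i ∈ s, M i * P = M i := by
  classical
  have hcompl : (∑ i ∈ s, M i) * (1 - P) = 0 := by rw [hsum, hP.mul_one_sub_self]
  intro i hi
  have h : M i * (1 - P) = 0 := mul_eq_zero_of_sum_mul_eq_zero hM hcompl i hi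
  rwa [Matrix.mul_sub, Matrix.mul_one, sub_eq_zero, eq_comm] at h

end PosSemidef

section Sqrt

open scoped MatrixOrder Matrix.Norms.L2Operator

variable {n 𝕜 : Type*} [Fintype n] [DecidableEq n] [RCLike 𝕜]

theorem posSemidef_sqrt_eq_cfc_sqrt {A : Matrix n n 𝕜} (hA : A.PosSemidef) :
    hA.sqrt = CFC.sqrt A := by
  rw [CFC.sqrt_eq_real_sqrt A hA.nonneg, cfcₙ_eq_cfc, hA.1.cfc_eq]
  rfl

theorem posSemidef_sqrt_mul_self {A : Matrix n n 𝕜} (hA : A.PosSemidef) :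
    hA.sqrt * hA.sqrt = A := by
  rw [posSemidef_sqrt_eq_cfc_sqrt, CFC.sqrt_mul_sqrt_self A hA.nonneg]

theorem isHermitian_posSemidef_sqrt {A : Matrix n n 𝕜} (hA : A.PosSemidef) :
    hA.sqrt.IsHermitian := by
  rw [posSemidef_sqrt_eq_cfc_sqrt]
  exact (CFC.sqrt_nonneg A).posSemidef.1

theorem posSemidef_sqrt_eq_self_of_isIdempotentElem {P : Matrix n n 𝕜}
    (hP : P.PosSemidef) (h : IsIdempotentElem P) : hP.sqrt = P := by
  rw [posSemidef_sqrt_eq_cfc_sqrt, CFC.sqrt_unique h hP.nonneg]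

end Sqrt

section Kraus

variable {ι κ : Type*} {k m n : Type} [Fintype ι] [Fintype κ] [Fintype n]

/-- The super-operator `ρ ↦ ∑ a, K a * ρ * (K a)ᴴ` with Kraus operators `K a`; the completely
positive super-operators are those of this form. -/
def krausMap (K : ι → Matrix m n ℂ) : MatMap n m where
  toFun ρ := ∑ a, K a * ρ * (K a)ᴴ
  map_add' ρ σ := by simp only [Matrix.mul_add, Matrix.add_mul, Finset.sum_add_distrib]
  map_smul' c ρ := by
    simp only [Matrix.mul_smul, Matrix.smul_mul, Finset.smul_sum, RingHom.id_apply]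

theorem krausMap_apply (K : ι → Matrix m n ℂ) (ρ : Matrix n n ℂ) :
    krausMap K ρ = ∑ a, K a * ρ * (K a)ᴴ := rfl

theorem krausMap_comp [Fintype m] (L : κ → Matrix k m ℂ) (K : ι → Matrix m n ℂ) :
    krausMap L ∘ₗ krausMap K = krausMap fun c : κ × ι => L c.1 * K c.2 := by
  ext1 ρ
  simp only [LinearMap.comp_apply, krausMap_apply, Fintype.sum_prod_type, conjTranspose_mul,
    Matrix.mul_sum, Matrix.sum_mul, Matrix.mul_assoc]

variable [DecidableEq n]

theorem krausMap_single_apply (K : ι → Matrix m n ℂ) (i j : n) (r s : m) :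
    krausMap K (single i j 1) r s = ∑ a, K a r i * star (K a s j) := by
  simp [krausMap_apply, Matrix.sum_apply, Matrix.mul_apply, single_apply, ite_and]

theorem isCP_krausMap [Fintype m] (K : ι → Matrix m n ℂ) : IsCP (krausMap K) := by
  let v (a : ι) (p : n × m) : ℂ := K a p.2 p.1
  have hchoi : choiMatrix (krausMap K) = ∑ a, vecMulVec (v a) (star (v a)) := by
    ext p q
    simp only [choiMatrix, krausMap_single_apply, Matrix.sum_apply, vecMulVec_apply, Pi.star_apply,
      v]
  rw [IsCP, hchoi]
  exact posSemidef_sum _ fun a _ => posSemidef_vecMulVec_self_star (v a)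

theorem dualId_krausMap [Fintype m] (K : ι → Matrix m n ℂ) :
    dualId (krausMap K) = ∑ a, (K a)ᴴ * K a := by
  ext i j
  simp only [dualId, trace, diag_apply, krausMap_single_apply, Matrix.sum_apply, Matrix.mul_apply,
    conjTranspose_apply]
  rw [Finset.sum_comm]
  simp only [mul_comm]

theorem mul_eq_zero_of_dualId_krausMap_mul_eq_zero [Fintype m] {l : Type*}
    {K : ι → Matrix m n ℂ} {N : Matrix n l ℂ} (hN : dualId (krausMap K) * N = 0) (a : ι) :
    K a * N = 0 := by
  rw [dualId_krausMap] at hN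
  exact (conjTranspose_mul_self_mul_eq_zero (K a) N).1 <|
    mul_eq_zero_of_sum_mul_eq_zero (fun a _ => posSemidef_conjTranspose_mul_self (K a)) hN a
      (Finset.mem_univ a)

end Kraus

section CompletelyPositive

variable [Fintype dH] [DecidableEq dH] [Fintype dK] [Fintype dV]

namespace IsCP

open scoped MatrixOrder Matrix.Norms.L2Operator in
theorem exists_eq_krausMap {Φ : MatMap dH dK} (hΦ : IsCP Φ) :
    ∃ K : dH × dK → Matrix dK dH ℂ, Φ = krausMap K := by
  classical
  -- If `Bᴴ * B` is the Choi matrix, the conjugated rows of `B` are the Kraus operators.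
  obtain ⟨B, hB⟩ := CStarAlgebra.nonneg_iff_eq_star_mul_self.mp (PosSemidef.nonneg hΦ)
  refine ⟨fun a => of fun k i => star (B a (i, k)),
    ext_linearMap ℂ fun i j => LinearMap.ext_ring ?_⟩
  ext k l
  calc Φ (single i j 1) k l = (Bᴴ * B) (i, k) (j, l) := congrFun₂ hB (i, k) (j, l)
    _ = krausMap _ (single i j 1) k l := by
      simp only [krausMap_single_apply, Matrix.mul_apply, conjTranspose_apply, of_apply, star_star]

theorem comp [DecidableEq dK] {Ψ : MatMap dK dV} {Φ : MatMap dH dK} (hΨ : IsCP Ψ) (hΦ : IsCP Φ) :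
    IsCP (Ψ ∘ₗ Φ) := by
  obtain ⟨K, rfl⟩ := hΦ.exists_eq_krausMap
  obtain ⟨L, rfl⟩ := hΨ.exists_eq_krausMap
  rw [krausMap_comp]
  exact isCP_krausMap _

theorem map_posSemidef {Φ : MatMap dH dK} (hΦ : IsCP Φ) {ρ : Matrix dH dH ℂ}
    (hρ : ρ.PosSemidef) : (Φ ρ).PosSemidef := by
  obtain ⟨K, rfl⟩ := hΦ.exists_eq_krausMap
  exact posSemidef_sum _ fun a _ => hρ.mul_mul_conjTranspose_same (K a)

theorem posSemidef_dualId {Φ : MatMap dH dK} (hΦ : IsCP Φ) : (dualId Φ).PosSemidef := by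
  obtain ⟨K, rfl⟩ := hΦ.exists_eq_krausMap
  rw [dualId_krausMap]
  exact posSemidef_sum _ fun a _ => posSemidef_conjTranspose_mul_self (K a)

theorem map_conj_congr {Φ : MatMap dH dK} (hΦ : IsCP Φ) {k : Type*} [Fintype k]
    {M N : Matrix dH k ℂ} (hMN : dualId Φ * M = dualId Φ * N) (ρ : Matrix k k ℂ) :
    Φ (M * ρ * Mᴴ) = Φ (N * ρ * Nᴴ) := by
  obtain ⟨K, rfl⟩ := hΦ.exists_eq_krausMap
  have hK (a) : K a * M = K a * N := by
    rw [← sub_eq_zero, ← Matrix.mul_sub]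
    exact mul_eq_zero_of_dualId_krausMap_mul_eq_zero (by rw [Matrix.mul_sub, hMN, sub_self]) a
  have hconj (X : Matrix dH k ℂ) (a) :
      K a * (X * ρ * Xᴴ) * (K a)ᴴ = (K a * X) * ρ * (K a * X)ᴴ := by
    simp only [conjTranspose_mul, Matrix.mul_assoc]
  simp only [krausMap_apply, hconj, hK]

end IsCP

theorem dualId_sum {ι : Type*} (s : Finset ι) (Φ : ι → MatMap dH dK) :
    dualId (∑ i ∈ s, Φ i) = ∑ i ∈ s, dualId (Φ i) := by
  ext i j
  simp only [dualId, LinearMap.sum_apply, trace_sum, Matrix.sum_apply]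

theorem dualId_comp_of_isTP {Ψ : MatMap dK dV} (hΨ : IsTP Ψ) (Φ : MatMap dH dK) :
    dualId (Ψ ∘ₗ Φ) = dualId Φ := by
  ext i j
  exact hΨ _

theorem dualId_eq_of_apply_eq_conj {Φ : MatMap dH dK} {K : Matrix dK dH ℂ}
    (hΦ : ∀ ρ, Φ ρ = K * ρ * Kᴴ) : dualId Φ = Kᴴ * K := by
  have hkraus : Φ = krausMap fun _ : Unit => K :=
    LinearMap.ext fun ρ => by rw [hΦ, krausMap_apply, Fintype.sum_unique]
  rw [hkraus, dualId_krausMap, Fintype.sum_unique]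

end CompletelyPositive

section Instruments

variable [Fintype Ω] [Fintype Λ] [Fintype dH] [DecidableEq dH] [Fintype dV]

/-- The sequential composition of instruments: measure `I`, then measure `J` on its output. The
outcome `(x, y)` lists the outcome of `I` first. -/
def Instrument.seq [Fintype dK] [DecidableEq dK] (I : Instrument Ω dH dK) (J : Instrument Λ dK dV) :
    Instrument (Ω × Λ) dH dV where
  op p := J.op p.2 ∘ₗ I.op p.1
  cp p := (J.cp p.2).comp (I.cp p.1)
  tni p ρ hρ := (J.tni p.2 _ ((I.cp p.1).map_posSemidef hρ)).trans (I.tni p.1 ρ hρ)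
  tp ρ := by
    have hcomp : ∑ p : Ω × Λ, J.op p.2 ∘ₗ I.op p.1 = (∑ y, J.op y) ∘ₗ ∑ x, I.op x := by
      simp only [Fintype.sum_prod_type, linearMap_sum_comp, linearMap_comp_sum]
    rw [hcomp, LinearMap.comp_apply, J.tp, I.tp]

theorem POVMNonDisturbs.povmInsCompatible {A : POVM Ω dH} {J : Instrument Λ dH dV}
    (h : POVMNonDisturbs A J) : POVMInsCompatible A J := by
  obtain ⟨I, hIA, hIJ⟩ := h
  refine ⟨I.seq J, fun y => ?_, fun x => ?_⟩
  · calc ∑ x, J.op y ∘ₗ I.op x = J.op y ∘ₗ ∑ x, I.op x := (linearMap_comp_sum ..).symm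
      _ = J.op y := hIJ y
  · calc ∑ y, dualId (J.op y ∘ₗ I.op x) = dualId ((∑ y, J.op y) ∘ₗ I.op x) := by
          rw [linearMap_sum_comp, dualId_sum]
      _ = A.elem x := by rw [dualId_comp_of_isTP J.tp, hIA]

/-- `L` is the Lüders instrument of `A`, whose operations are `ρ ↦ √A(x) ρ √A(x)`. -/
def IsLueders (L : Instrument Ω dH dH) (A : POVM Ω dH) : Prop :=
  ∀ x, ∀ ρ : Matrix dH dH ℂ, L.op x ρ = (A.pos x).sqrt * ρ * (A.pos x).sqrt

theorem IsLueders.dualId_op {L : Instrument Ω dH dH} {A : POVM Ω dH} (hL : IsLueders L A) (x : Ω) :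
    dualId (L.op x) = A.elem x := by
  have hsqrt : (A.pos x).sqrtᴴ = (A.pos x).sqrt := isHermitian_posSemidef_sqrt (A.pos x)
  rw [dualId_eq_of_apply_eq_conj (K := (A.pos x).sqrt) (by simpa only [hsqrt] using hL x), hsqrt,
    posSemidef_sqrt_mul_self]

namespace IsSharp

variable {A : POVM Ω dH}

theorem elem_mul_elem_of_ne (hA : IsSharp A) {x z : Ω} (hxz : x ≠ z) :
    A.elem x * A.elem z = 0 := by
  classical
  have hrest : (∑ w ∈ Finset.univ.erase z, A.elem w) * A.elem z = 0 := by
    rw [Finset.sum_erase_eq_sub (Finset.mem_univ z), A.sum_eq, Matrix.sub_mul, hA z,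
      Matrix.one_mul, sub_self]
  exact mul_eq_zero_of_sum_mul_eq_zero (fun w _ => A.pos w) hrest x
    (Finset.mem_erase.2 ⟨hxz, Finset.mem_univ x⟩)

theorem lueders_op_apply (hA : IsSharp A) {L : Instrument Ω dH dH} (hL : IsLueders L A) (x : Ω)
    (ρ : Matrix dH dH ℂ) : L.op x ρ = A.elem x * ρ * (A.elem x)ᴴ := by
  rw [hL, posSemidef_sqrt_eq_self_of_isIdempotentElem (A.pos x) (hA x), (A.pos x).1.eq]

theorem comp_lueders (hA : IsSharp A) {L : Instrument Ω dH dH} (hL : IsLueders L A)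
    {Φ : MatMap dH dV} (hΦ : IsCP Φ) {x : Ω} (hx : dualId Φ * A.elem x = dualId Φ) :
    Φ ∘ₗ ∑ z, L.op z = Φ := by
  have hself (ρ) : Φ (L.op x ρ) = Φ ρ := by
    rw [hA.lueders_op_apply hL, hΦ.map_conj_congr (N := 1) (by rw [hx, Matrix.mul_one])]
    simp only [Matrix.one_mul, conjTranspose_one, Matrix.mul_one]
  have hother (z) (hz : z ≠ x) (ρ) : Φ (L.op z ρ) = 0 := by
    rw [hA.lueders_op_apply hL, hΦ.map_conj_congr (N := 0)
      (by rw [← hx, Matrix.mul_assoc, hA.elem_mul_elem_of_ne hz.symm]; simp only [Matrix.mul_zero])]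
    simp only [Matrix.zero_mul, map_zero]
  ext1 ρ
  rw [LinearMap.comp_apply, LinearMap.sum_apply, map_sum,
    Fintype.sum_eq_single x fun z hz => hother z hz ρ, hself]

theorem nonDisturbs_lueders (hA : IsSharp A) {L : Instrument Ω dH dH} (hL : IsLueders L A)
    {J : Instrument Λ dH dV} (hAJ : POVMInsCompatible A J) : NonDisturbs L J := by
  obtain ⟨G, hGJ, hGA⟩ := hAJ
  intro y
  have heffect (x) : dualId (G.op (x, y)) * A.elem x = dualId (G.op (x, y)) :=
    mul_eq_self_of_sum_eq_of_isIdempotentElem (fun y _ => (G.cp (x, y)).posSemidef_dualId)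
      (hGA x) (hA x) y (Finset.mem_univ y)
  have hG (x) : G.op (x, y) ∘ₗ ∑ z, L.op z = G.op (x, y) :=
    hA.comp_lueders hL (G.cp (x, y)) (heffect x)
  calc J.op y ∘ₗ ∑ z, L.op z = ∑ x, G.op (x, y) ∘ₗ ∑ z, L.op z := by
        rw [← hGJ, linearMap_sum_comp]
    _ = J.op y := by simp only [hG, hGJ]

end IsSharp

end Instruments

/-- If a POVM `A` does not disturb an instrument `J`, then `A` and `J` are
compatible. Conversely, if `A` is sharp and `A` and `J` are compatible, then `A` does not
disturb `J`; in fact the Lüders instrument of `A` does not disturb `J`. -/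
theorem povm_nondisturbance_and_compatibility
    [Fintype Ω] [Fintype Λ] [Fintype dH] [DecidableEq dH] [Fintype dV]
    (A : POVM Ω dH) (J : Instrument Λ dH dV)
    (L : Instrument Ω dH dH)
    (hL : ∀ x, ∀ ρ : Matrix dH dH ℂ, L.op x ρ = (A.pos x).sqrt * ρ * (A.pos x).sqrt) :
    (POVMNonDisturbs A J → POVMInsCompatible A J) ∧
    (IsSharp A → POVMInsCompatible A J →
      NonDisturbs L J ∧ POVMNonDisturbs A J) := by
  have hLA : IsLueders L A := hL
  refine ⟨POVMNonDisturbs.povmInsCompatible, fun hA hAJ => ?_⟩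
  have hLJ : NonDisturbs L J := hA.nonDisturbs_lueders hLA hAJ
  exact ⟨hLJ, L, hLA.dualId_op, hLJ⟩
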